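/- (Quotients of the smooth function algebra by powers of a point ideal are Weil algebras.) Let x ∈ ℝ^p and k ∈ ℕ, and let A := C^∞(ℝ^p, ℝ) / I_x^{k+1} with quotient map π. Then A is a finite-dimensional commutative ℝ-algebra of dimension equal to the binomial coefficient C(p+k, p), the ideal π(I_x) = I_x / I_x^{k+1} is nilpotent (its (k+1)-st power is zero), and the subspaces ℝ·1 and π(I_x) of A are complementary; in particular (A, π(I_x)) is a Weil algebra. -/

import Mathlib

open scoped Manifold

noncomputable section

/-- The algebra of smooth real-valued functions on `ℝ^p`. -/
abbrev SmoothFn (p : ℕ) : Type :=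
  ContMDiffMap (𝓡 p) 𝓘(ℝ, ℝ) (EuclideanSpace ℝ (Fin p)) ℝ (⊤ : ℕ∞)

/-- Evaluation at a point, as an `ℝ`-algebra homomorphism `C^∞(ℝ^p, ℝ) → ℝ`. -/
def evalAlgHom {p : ℕ} (x : EuclideanSpace ℝ (Fin p)) : SmoothFn p →ₐ[ℝ] ℝ where
  toFun f := f x
  map_one' := rfl
  map_mul' _ _ := rfl
  map_zero' := rfl
  map_add' _ _ := rfl
  commutes' _ := rfl


open scoped ContDiff Topology

theorem hasFDerivAt_paramInt {E F : Type} [NormedAddCommGroup E] [NormedSpace ℝ E] [ProperSpace E]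
    [NormedAddCommGroup F] [NormedSpace ℝ F]
    (G : E × ℝ → F) (hG : ContDiff ℝ ∞ G) (y : E) :
    HasFDerivAt (fun y => ∫ t in (0:ℝ)..1, G (y, t))
      (∫ t in (0:ℝ)..1, (fderiv ℝ G (y, t)).comp (ContinuousLinearMap.inl ℝ E ℝ)) y := by
  have hc : Continuous G := hG.continuous
  have hc' : Continuous (fun q : E × ℝ =>
      (fderiv ℝ G q).comp (ContinuousLinearMap.inl ℝ E ℝ)) :=
    (hG.continuous_fderiv (by simp)).clm_comp continuous_const
  obtain ⟨C, hC⟩ := ((isCompact_closedBall y 1).prod (isCompact_Icc (a := (0:ℝ)) (b := 1))).exists_bound_of_continuousOn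
    hc'.continuousOn
  refine intervalIntegral.hasFDerivAt_integral_of_dominated_of_fderiv_le
    (F := fun y t => G (y, t))
    (F' := fun y t => (fderiv ℝ G (y, t)).comp (ContinuousLinearMap.inl ℝ E ℝ))
    (bound := fun _ => C)
    (Metric.closedBall_mem_nhds y one_pos) ?_ ?_ ?_ ?_ ?_ ?_
  · exact Filter.Eventually.of_forall fun z =>
      (hc.comp (Continuous.prodMk_right z)).aestronglyMeasurable
  · exact (hc.comp (Continuous.prodMk_right y)).intervalIntegrable _ _
  · exact (hc'.comp (Continuous.prodMk_right y)).aestronglyMeasurable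
  · refine Filter.Eventually.of_forall fun t ht z hz => hC (z, t) ⟨hz, ?_⟩
    rw [Set.uIoc_of_le zero_le_one] at ht
    exact ⟨ht.1.le, ht.2⟩
  · exact intervalIntegrable_const
  · refine Filter.Eventually.of_forall fun t ht z hz => ?_
    have h1 : HasFDerivAt G (fderiv ℝ G (z, t)) (z, t) :=
      (hG.differentiable (by simp) (z, t)).hasFDerivAt
    exact h1.comp z (hasFDerivAt_prodMk_left z t)

theorem contDiff_paramInt_nat {E : Type} [NormedAddCommGroup E] [NormedSpace ℝ E] [ProperSpace E]
    (n : ℕ) : ∀ {F : Type} [NormedAddCommGroup F] [NormedSpace ℝ F]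
    (G : E × ℝ → F) (_ : ContDiff ℝ ∞ G),
    ContDiff ℝ n (fun y => ∫ t in (0:ℝ)..1, G (y, t)) := by
  induction n with
  | zero =>
    intro F _ _ G hG
    rw [Nat.cast_zero, contDiff_zero]
    exact intervalIntegral.continuous_parametric_intervalIntegral_of_continuous'
      (f := fun y t => G (y, t)) hG.continuous 0 1
  | succ n ih =>
    intro F _ _ G hG
    rw [Nat.cast_succ, contDiff_succ_iff_hasFDerivAt]
    refine ⟨_, ih (fun q : E × ℝ => (fderiv ℝ G q).comp (ContinuousLinearMap.inl ℝ E ℝ)) ?_,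
      fun y => hasFDerivAt_paramInt G hG y⟩
    exact (hG.fderiv_right (m := ∞) (by simp)).clm_comp contDiff_const

theorem contDiff_paramInt {E F : Type} [NormedAddCommGroup E] [NormedSpace ℝ E] [ProperSpace E]
    [NormedAddCommGroup F] [NormedSpace ℝ F]
    (G : E × ℝ → F) (hG : ContDiff ℝ ∞ G) :
    ContDiff ℝ ∞ (fun y => ∫ t in (0:ℝ)..1, G (y, t)) :=
  contDiff_infty.2 fun n => contDiff_paramInt_nat n G hG

/-- Hadamard's lemma. -/
theorem hadamard_fn {p : ℕ} (x : EuclideanSpace ℝ (Fin p)) (f : EuclideanSpace ℝ (Fin p) → ℝ)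
    (hf : ContDiff ℝ ∞ f) :
    ∃ g : Fin p → EuclideanSpace ℝ (Fin p) → ℝ, (∀ i, ContDiff ℝ ∞ (g i)) ∧
      ∀ y, f y = f x + ∑ i, (y i - x i) * g i y := by
  have hf' : ContDiff ℝ ∞ (fderiv ℝ f) := hf.fderiv_right (m := ∞) (by simp)
  have hG : ∀ v : EuclideanSpace ℝ (Fin p), ContDiff ℝ ∞
      (fun q : EuclideanSpace ℝ (Fin p) × ℝ => fderiv ℝ f (x + q.2 • (q.1 - x)) v) := by
    intro v
    refine (hf'.comp ?_).clm_apply contDiff_const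
    fun_prop
  refine ⟨fun i y => ∫ t in (0:ℝ)..1, fderiv ℝ f (x + t • (y - x)) (EuclideanSpace.single i 1),
    fun i => contDiff_paramInt _ (hG _), fun y => ?_⟩
  have hint : ∀ v : EuclideanSpace ℝ (Fin p), IntervalIntegrable
      (fun t : ℝ => fderiv ℝ f (x + t • (y - x)) v) MeasureTheory.volume 0 1 := fun v =>
    ((hG v).continuous.comp (Continuous.prodMk_right y)).intervalIntegrable _ _
  have hd : ∀ t ∈ Set.uIcc (0:ℝ) 1, HasDerivAt (fun t : ℝ => f (x + t • (y - x)))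
      (fderiv ℝ f (x + t • (y - x)) (y - x)) t := by
    intro t _
    have h1 : HasDerivAt (fun t : ℝ => x + t • (y - x)) (y - x) t := by
      simpa using ((hasDerivAt_id t).smul_const (y - x)).const_add x
    exact ((hf.differentiable (by simp) _).hasFDerivAt).comp_hasDerivAt t h1
  have h := intervalIntegral.integral_eq_sub_of_hasDerivAt hd (hint _)
  have hv : y - x = ∑ i, (y i - x i) • EuclideanSpace.single i (1:ℝ) := by
    ext j
    simp [Finset.sum_apply, Pi.single_apply]
  have h2 : ∀ t : ℝ, fderiv ℝ f (x + t • (y - x)) (y - x) =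
      ∑ i, (y i - x i) * fderiv ℝ f (x + t • (y - x)) (EuclideanSpace.single i 1) := by
    intro t
    generalize fderiv ℝ f (x + t • (y - x)) = L
    conv_lhs => rw [hv]
    simp
  simp_rw [h2] at h
  rw [intervalIntegral.integral_finsetSum (fun i _ => (hint _).const_mul _)] at h
  simp only [intervalIntegral.integral_const_mul] at h
  simp at h
  rw [h]; ring

theorem card_expo (p k : ℕ) :
    Nat.card {n : Fin p →₀ ℕ | (n.sum fun _ e => e) ≤ k} = (p + k).choose p := by
  have e1 : {n : Fin p →₀ ℕ | (n.sum fun _ e => e) ≤ k} ≃ {P : Fin (p+1) → ℕ // ∑ i, P i = k} :=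
    { toFun := fun n => ⟨Fin.cons (k - ∑ i, n.1 i) n.1, by
        have := n.2
        rw [Set.mem_ofPred_eq, Finsupp.sum_fintype _ _ (by simp)] at this
        simp [Fin.sum_univ_succ]; omega⟩
      invFun := fun P => ⟨Finsupp.equivFunOnFinite.symm (Fin.tail P.1), by
        have := P.2
        rw [Fin.sum_univ_succ] at this
        rw [Set.mem_ofPred_eq, Finsupp.sum_fintype _ _ (by simp)]
        simp [Fin.tail]; omega⟩
      left_inv := fun n => by ext i; simp
      right_inv := fun P => by
        have := P.2
        rw [Fin.sum_univ_succ] at this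
        ext i
        refine Fin.cases ?_ (fun j => ?_) i
        · simp [Fin.tail]; omega
        · simp [Fin.tail] }
  rw [Nat.card_congr (e1.trans (Sym.equivNatSumOfFintype _ _).symm), Nat.card_eq_fintype_card,
    Sym.card_sym_eq_choose]
  simp only [Fintype.card_fin]
  rw [show p + 1 + k - 1 = p + k by omega, Nat.choose_symm_add]

theorem finrank_restrict (p k : ℕ) :
    Module.finrank ℝ (MvPolynomial.restrictTotalDegree (Fin p) ℝ k) = (p + k).choose p := by
  rw [← card_expo]
  exact Module.finrank_eq_nat_card_basis (MvPolynomial.basisRestrictSupport ℝ _)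

/-- The point ideal. -/
abbrev ptIdeal {p : ℕ} (x : EuclideanSpace ℝ (Fin p)) : Ideal (SmoothFn p) :=
  RingHom.ker (evalAlgHom x).toRingHom

theorem mem_ptIdeal {p : ℕ} (x : EuclideanSpace ℝ (Fin p)) (f : SmoothFn p) :
    f ∈ ptIdeal x ↔ f x = 0 := Iff.rfl

/-- The centered coordinate function. -/
def coordFn {p : ℕ} (x : EuclideanSpace ℝ (Fin p)) (i : Fin p) : SmoothFn p :=
  ⟨fun y => y i - x i, by
    rw [contMDiff_iff_contDiff]
    fun_prop⟩

theorem coordFn_apply {p : ℕ} (x y : EuclideanSpace ℝ (Fin p)) (i : Fin p) :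
    coordFn x i y = y i - x i := rfl

theorem coordFn_mem {p : ℕ} (x : EuclideanSpace ℝ (Fin p)) (i : Fin p) :
    coordFn x i ∈ ptIdeal x := by
  rw [mem_ptIdeal, coordFn_apply, sub_self]

theorem algebraMap_smooth_apply {p : ℕ} (c : ℝ) (y : EuclideanSpace ℝ (Fin p)) :
    (algebraMap ℝ (SmoothFn p) c) y = c := rfl

theorem sub_const_mem {p : ℕ} (x : EuclideanSpace ℝ (Fin p)) (f : SmoothFn p) :
    f - algebraMap ℝ (SmoothFn p) (f x) ∈ ptIdeal x := by
  rw [RingHom.mem_ker, map_sub, sub_eq_zero]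
  rfl

theorem evalAlgHom_apply {p : ℕ} (x : EuclideanSpace ℝ (Fin p)) (f : SmoothFn p) :
    evalAlgHom x f = f x := rfl

theorem hadamard {p : ℕ} (x : EuclideanSpace ℝ (Fin p)) (f : SmoothFn p) (hf : f ∈ ptIdeal x) :
    ∃ g : Fin p → SmoothFn p, f = ∑ i, coordFn x i * g i := by
  obtain ⟨g, hg, h⟩ := hadamard_fn x f (contMDiff_iff_contDiff.1 f.contMDiff)
  refine ⟨fun i => ⟨g i, contMDiff_iff_contDiff.2 (hg i)⟩, ?_⟩
  ext y
  rw [h y, (mem_ptIdeal x f).1 hf, zero_add, ← evalAlgHom_apply, map_sum]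
  rfl

/-- Polynomials as smooth functions centered at `x`. -/
def polyHom {p : ℕ} (x : EuclideanSpace ℝ (Fin p)) : MvPolynomial (Fin p) ℝ →ₐ[ℝ] SmoothFn p :=
  MvPolynomial.aeval (coordFn x)

theorem polyHom_apply {p : ℕ} (x y : EuclideanSpace ℝ (Fin p)) (P : MvPolynomial (Fin p) ℝ) :
    polyHom x P y = MvPolynomial.eval (fun i => y i - x i) P := by
  have h : (evalAlgHom y).comp (MvPolynomial.aeval (coordFn x)) =
      MvPolynomial.aeval (R := ℝ) (fun i => y i - x i) := by
    refine MvPolynomial.algHom_ext fun i => ?_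
    simp [evalAlgHom_apply, coordFn_apply]
  have h2 := DFunLike.congr_fun h P
  rw [MvPolynomial.aeval_eq_eval] at h2
  exact h2

theorem approx_one {p : ℕ} (x : EuclideanSpace ℝ (Fin p)) (f : SmoothFn p) (hf : f ∈ ptIdeal x) :
    ∃ P : MvPolynomial (Fin p) ℝ, P.totalDegree ≤ 1 ∧ f - polyHom x P ∈ ptIdeal x ^ 2 := by
  obtain ⟨g, rfl⟩ := hadamard x f hf
  refine ⟨∑ i, MvPolynomial.X i * MvPolynomial.C (g i x), ?_, ?_⟩
  · refine MvPolynomial.totalDegree_finsetSum_le fun i _ => ?_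
    refine (MvPolynomial.totalDegree_mul _ _).trans ?_
    simp
  · rw [map_sum, ← Finset.sum_sub_distrib]
    refine Ideal.sum_mem _ fun i _ => ?_
    have : coordFn x i * g i - polyHom x (MvPolynomial.X i * MvPolynomial.C (g i x)) =
        coordFn x i * (g i - algebraMap ℝ (SmoothFn p) (g i x)) := by
      rw [map_mul, mul_sub]
      simp [polyHom]
    rw [this, pow_two]
    exact Ideal.mul_mem_mul (coordFn_mem x i) (sub_const_mem x _)

theorem approx_pow {p : ℕ} (x : EuclideanSpace ℝ (Fin p)) (m : ℕ) :
    ∀ f ∈ ptIdeal x ^ m,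
    ∃ P : MvPolynomial (Fin p) ℝ, P.totalDegree ≤ m ∧ f - polyHom x P ∈ ptIdeal x ^ (m + 1) := by
  induction m with
  | zero =>
    intro f _
    refine ⟨MvPolynomial.C (f x), by simp, ?_⟩
    have : polyHom x (MvPolynomial.C (f x)) = algebraMap ℝ (SmoothFn p) (f x) := by
      simp [polyHom]
    rw [this, zero_add, pow_one]
    exact sub_const_mem x f
  | succ m ih =>
    intro f hf
    rw [pow_succ] at hf
    refine Submodule.mul_induction_on hf ?_ ?_
    · intro a ha b hb
      obtain ⟨P, hP, hP'⟩ := ih a ha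
      obtain ⟨Q, hQ, hQ'⟩ := approx_one x b hb
      refine ⟨P * Q, (MvPolynomial.totalDegree_mul _ _).trans (by omega), ?_⟩
      have hPm : polyHom x P ∈ ptIdeal x ^ m := by
        have := Ideal.sub_mem _ ha (Ideal.pow_le_pow_right (Nat.le_succ m) hP')
        simpa using this
      have : a * b - polyHom x (P * Q) =
          (a - polyHom x P) * b + polyHom x P * (b - polyHom x Q) := by
        rw [map_mul]; ring
      rw [this]
      refine Ideal.add_mem _ ?_ ?_
      · rw [pow_succ _ (m + 1)]
        exact Ideal.mul_mem_mul hP' hb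
      · rw [show m + 1 + 1 = m + 2 by omega, pow_add]
        exact Ideal.mul_mem_mul hPm hQ'
    · rintro a b ⟨P, hP, hP'⟩ ⟨Q, hQ, hQ'⟩
      refine ⟨P + Q, (MvPolynomial.totalDegree_add _ _).trans (max_le hP hQ), ?_⟩
      have := Ideal.add_mem _ hP' hQ'
      rw [map_add]
      convert this using 1
      ring

theorem approx {p : ℕ} (x : EuclideanSpace ℝ (Fin p)) (f : SmoothFn p) (m : ℕ) :
    ∃ P : MvPolynomial (Fin p) ℝ, P.totalDegree ≤ m ∧ f - polyHom x P ∈ ptIdeal x ^ (m + 1) := by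
  induction m with
  | zero => exact approx_pow x 0 f (by simp)
  | succ m ih =>
    obtain ⟨P, hP, hP'⟩ := ih
    obtain ⟨Q, hQ, hQ'⟩ := approx_pow x _ _ hP'
    refine ⟨P + Q, (MvPolynomial.totalDegree_add _ _).trans (max_le (by omega) hQ), ?_⟩
    rw [map_add, ← sub_sub]
    exact hQ'

theorem line_div {p : ℕ} (x v : EuclideanSpace ℝ (Fin p)) (n : ℕ) :
    ∀ f ∈ ptIdeal x ^ n, ∃ h : ℝ → ℝ, Continuous h ∧ ∀ t : ℝ, f (x + t • v) = t ^ n * h t := by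
  have hcont : ∀ g : SmoothFn p, Continuous (fun t : ℝ => g (x + t • v)) := fun g =>
    g.contMDiff.continuous.comp (by fun_prop)
  induction n with
  | zero =>
    intro f _
    exact ⟨fun t => f (x + t • v), hcont f, by simp⟩
  | succ n ih =>
    intro f hf
    rw [pow_succ] at hf
    refine Submodule.mul_induction_on hf ?_ ?_
    · intro a ha b hb
      obtain ⟨h, hh, h1⟩ := ih a ha
      obtain ⟨g, rfl⟩ := hadamard x b hb
      refine ⟨fun t => h t * ∑ i, v i * g i (x + t • v),
        hh.mul (continuous_finsetSum _ fun i _ => continuous_const.mul (hcont _)), fun t => ?_⟩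
      have : ∀ y, (a * ∑ i, coordFn x i * g i : SmoothFn p) y =
          a y * ∑ i, (y i - x i) * g i y := by
        intro y
        rw [← evalAlgHom_apply, map_mul, map_sum]
        rfl
      rw [this, h1]
      simp only [PiLp.add_apply, PiLp.smul_apply, smul_eq_mul, add_sub_cancel_left, mul_assoc]
      rw [← Finset.mul_sum]
      ring
    · rintro a b ⟨h, hh, h1⟩ ⟨h', hh', h1'⟩
      refine ⟨fun t => h t + h' t, hh.add hh', fun t => ?_⟩
      change a _ + b _ = _
      rw [h1, h1']; ring

theorem poly_dvd (q : Polynomial ℝ) (n : ℕ) : ∀ (h : ℝ → ℝ), Continuous h →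
    (∀ t, q.eval t = t ^ n * h t) → Polynomial.X ^ n ∣ q := by
  induction n with
  | zero => intro h _ _; simp
  | succ n ih =>
    intro h hh hq
    obtain ⟨r, rfl⟩ := ih (fun t => t * h t) (continuous_id.mul hh)
      (fun t => by rw [hq]; ring)
    rw [pow_succ]
    refine mul_dvd_mul_left _ ?_
    rw [Polynomial.X_dvd_iff, Polynomial.coeff_zero_eq_eval_zero]
    have key : (fun t => r.eval t) = fun t => t * h t := by
      refine Continuous.ext_on (dense_compl_singleton (0:ℝ)) r.continuous
        (continuous_id.mul hh) ?_
      intro t ht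
      have := hq t
      rw [Polynomial.eval_mul, Polynomial.eval_pow, Polynomial.eval_X, pow_succ, mul_assoc] at this
      exact mul_left_cancel₀ (pow_ne_zero n ht) this
    simpa using congrFun key 0

theorem poly_inj {p : ℕ} (x : EuclideanSpace ℝ (Fin p)) (k : ℕ) (P : MvPolynomial (Fin p) ℝ)
    (hP : P.totalDegree ≤ k) (h : polyHom x P ∈ ptIdeal x ^ (k + 1)) : P = 0 := by
  apply MvPolynomial.funext
  intro w
  obtain ⟨g, hg, hgt⟩ := line_div x (WithLp.toLp 2 w) (k + 1) _ h
  let q : Polynomial ℝ := MvPolynomial.aeval (fun i => Polynomial.X * Polynomial.C (w i)) P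
  have hq : ∀ t, q.eval t = MvPolynomial.eval (fun i => t * w i) P := by
    intro t
    have h1 : (Polynomial.aeval (R := ℝ) t).comp
        (MvPolynomial.aeval (fun i => Polynomial.X * Polynomial.C (w i))) =
        MvPolynomial.aeval (R := ℝ) (fun i => t * w i) := by
      refine MvPolynomial.algHom_ext fun i => ?_
      simp
      exact mul_comm _ _
    have h2 := DFunLike.congr_fun h1 P
    rw [MvPolynomial.aeval_eq_eval] at h2
    rw [← Polynomial.coe_aeval_eq_eval]
    exact h2
  have hdeg : q.natDegree ≤ k := by
    refine (MvPolynomial.aeval_natDegree_le (n := 1) P (m := k) hP _ (fun i => ?_)).trans (by simp)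
    refine Polynomial.natDegree_mul_le.trans ?_
    simp
  have hdvd : Polynomial.X ^ (k + 1) ∣ q := by
    refine poly_dvd q (k + 1) g hg fun t => ?_
    rw [hq, ← hgt, polyHom_apply]
    congr 1
    simp
  have hq0 : q = 0 := by
    by_contra hne
    have := Polynomial.natDegree_le_of_dvd hdvd hne
    simp at this
    omega
  have := hq 1
  rw [hq0] at this
  simpa using this.symm

/-- The comparison map from polynomials of bounded degree to the jet algebra. -/
def jetMap {p : ℕ} (x : EuclideanSpace ℝ (Fin p)) (k : ℕ) :
    MvPolynomial.restrictTotalDegree (Fin p) ℝ k →ₗ[ℝ] (SmoothFn p ⧸ ptIdeal x ^ (k + 1)) :=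
  ((Ideal.Quotient.mkₐ ℝ (ptIdeal x ^ (k + 1))).toLinearMap ∘ₗ (polyHom x).toLinearMap) ∘ₗ
    (MvPolynomial.restrictTotalDegree (Fin p) ℝ k).subtype

theorem jetMap_bijective {p : ℕ} (x : EuclideanSpace ℝ (Fin p)) (k : ℕ) :
    Function.Bijective (jetMap x k) := by
  constructor
  · rw [injective_iff_map_eq_zero]
    rintro ⟨P, hP⟩ h
    rw [MvPolynomial.mem_restrictTotalDegree] at hP
    have h' : polyHom x P ∈ ptIdeal x ^ (k + 1) := Ideal.Quotient.eq_zero_iff_mem.1 h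
    exact Subtype.ext (poly_inj x k P hP h')
  · intro a
    obtain ⟨f, rfl⟩ := Ideal.Quotient.mk_surjective a
    obtain ⟨P, hP, hP'⟩ := approx x f k
    exact ⟨⟨P, (MvPolynomial.mem_restrictTotalDegree _ _ _).2 hP⟩,
      (Ideal.Quotient.eq.2 hP').symm⟩

theorem mk_mem_map_iff {p : ℕ} (x : EuclideanSpace ℝ (Fin p)) (k : ℕ) (f : SmoothFn p) :
    Ideal.Quotient.mk (ptIdeal x ^ (k + 1)) f ∈
      Ideal.map (Ideal.Quotient.mk (ptIdeal x ^ (k + 1))) (ptIdeal x) ↔ f ∈ ptIdeal x :=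
  Ideal.mem_quotient_iff_mem (Ideal.pow_le_self (Nat.succ_ne_zero k))

/-- Quotients of the smooth function algebra by powers of a point ideal are Weil algebras:
`A = C^∞(ℝ^p, ℝ)/I_x^{k+1}` is finite-dimensional of dimension `C(p+k, p)`, the image of
`I_x` in `A` is nilpotent with `(k+1)`-st power zero, and `A = ℝ·1 ⊕ I_x/I_x^{k+1}`. -/
theorem quotient_by_point_ideal_power_is_weil (p k : ℕ) (x : EuclideanSpace ℝ (Fin p)) :
    FiniteDimensional ℝ (SmoothFn p ⧸ (RingHom.ker (evalAlgHom x).toRingHom) ^ (k + 1)) ∧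
    Module.finrank ℝ (SmoothFn p ⧸ (RingHom.ker (evalAlgHom x).toRingHom) ^ (k + 1)) =
      (p + k).choose p ∧
    (Ideal.map (Ideal.Quotient.mk ((RingHom.ker (evalAlgHom x).toRingHom) ^ (k + 1)))
        (RingHom.ker (evalAlgHom x).toRingHom)) ^ (k + 1) = ⊥ ∧
    IsCompl
      (Submodule.span ℝ
        {(1 : SmoothFn p ⧸ (RingHom.ker (evalAlgHom x).toRingHom) ^ (k + 1))})
      (Submodule.restrictScalars ℝ
        (Ideal.map (Ideal.Quotient.mk ((RingHom.ker (evalAlgHom x).toRingHom) ^ (k + 1)))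
          (RingHom.ker (evalAlgHom x).toRingHom))) := by
  let e := LinearEquiv.ofBijective (jetMap x k) (jetMap_bijective x k)
  refine ⟨Module.Finite.equiv e, ?_, ?_, ?_⟩
  · rw [← finrank_restrict]
    exact e.finrank_eq.symm
  · rw [← Ideal.map_pow, Ideal.map_quotient_self]
  · constructor
    · rw [Submodule.disjoint_def]
      intro a ha hb
      obtain ⟨c, rfl⟩ := Submodule.mem_span_singleton.1 ha
      have hb' : Ideal.Quotient.mk (ptIdeal x ^ (k + 1)) (algebraMap ℝ (SmoothFn p) c) ∈
          Ideal.map (Ideal.Quotient.mk (ptIdeal x ^ (k + 1))) (ptIdeal x) := by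
        rw [Algebra.algebraMap_eq_smul_one]
        exact hb
      rw [mk_mem_map_iff, mem_ptIdeal, algebraMap_smooth_apply] at hb'
      rw [hb', zero_smul]
    · rw [codisjoint_iff, eq_top_iff]
      intro a _
      obtain ⟨f, rfl⟩ := Ideal.Quotient.mk_surjective a
      rw [Submodule.mem_sup]
      refine ⟨Ideal.Quotient.mk _ (algebraMap ℝ (SmoothFn p) (f x)), ?_,
        Ideal.Quotient.mk _ (f - algebraMap ℝ (SmoothFn p) (f x)), ?_, ?_⟩
      · rw [Submodule.mem_span_singleton]
        refine ⟨f x, ?_⟩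
        rw [Algebra.algebraMap_eq_smul_one]
        rfl
      · exact (mk_mem_map_iff x k _).2 (sub_const_mem x f)
      · rw [← map_add, add_sub_cancel]
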